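/- arXiv:2501.19373 — 3 statements merged into one kernel-verified Lean document; each statement's English description precedes it below -/
import Mathlib

section
/- For every r > 0, every integer d ≥ 1 and every x₁ ∈ ℝ^d, the function u(x) = G_r(x,x₁) is infinitely differentiable on ℝ^d ∖ {x₁} and is r-harmonic for the Brownian generator there: (1/2)·Δu(x) = r·u(x) for all x ≠ x₁, where Δ denotes the Laplacian on ℝ^d. -/
/-!
Write `k_a(s, t) = e^{-rt} t^a e^{-s/(2t)}` and `F_a(s) = ∫_0^∞ k_a(s, t) dt` for `s > 0`. Then
`G_r(x, x₁) = (2π)^{-d/2} F_{-d/2}(‖x - x₁‖²)`, so everything reduces to the one-variable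
functions `F_a`. The essential facts are:

* `k_a(s, ·)` is integrable for every real `a` (`integrableOn_greenIntegrand`), because
  `e^{-s/(2t)}` decays at `0` faster than any power of `t`;
* `F_a' = -F_{a-1}/2` (`hasDerivAt_greenRadial`), by dominated differentiation: `k_a(·, t)` is
  decreasing, so `k_{a-1}(s/2, ·)` dominates near `s`. Iterating gives smoothness on `(0, ∞)`;
* `(s/2) F_{a-2}(s) + a F_{a-1}(s) = r F_a(s)` (`greenRadial_recurrence`, for `a ≠ 0`), from integrating
  `∂_t k_a`, since `k_a(s, t)` vanishes as `t → 0` and as `t → ∞`.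

The Laplacian of a radial function `h(‖x - x₁‖²)` is `4 ‖x - x₁‖² h'' + 2 d h'`
(`laplacian_radial`). With `h = F_a`, `a = -d/2`, half of it is `(s/2) F_{a-2} + a F_{a-1}`
at `s = ‖x - x₁‖²`, which is `r F_a` by the recurrence.
-/

open MeasureTheory ENNReal

/-- The `r`-Green kernel of `d`-dimensional Brownian motion. -/
noncomputable def greenKernelReal (r : ℝ) (d : ℕ) (x y : EuclideanSpace ℝ (Fin d)) : ℝ :=
  ∫ t in Set.Ioi (0 : ℝ),
    Real.exp (-r * t) * (2 * Real.pi * t) ^ (-(d : ℝ) / 2) *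
      Real.exp (-‖x - y‖ ^ 2 / (2 * t))

/-- The Laplacian on `ℝ^d`: the sum of the second derivatives in the coordinate
directions. -/
noncomputable def laplacian {d : ℕ} (u : EuclideanSpace ℝ (Fin d) → ℝ)
    (x : EuclideanSpace ℝ (Fin d)) : ℝ :=
  ∑ i : Fin d,
    fderiv ℝ (fun y => fderiv ℝ u y (EuclideanSpace.single i (1 : ℝ))) x
      (EuclideanSpace.single i (1 : ℝ))

open Filter Topology

/-- The time integrand `e^{-rt} t^a e^{-s/(2t)}`, where `s` stands for a squared distance. -/
noncomputable def greenIntegrand (r a s t : ℝ) : ℝ :=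
  Real.exp (-r * t) * t ^ a * Real.exp (-s / (2 * t))

/-- The radial profile `F_a(s) = ∫_0^∞ e^{-rt} t^a e^{-s/(2t)} dt`. -/
noncomputable def greenRadial (r a s : ℝ) : ℝ :=
  ∫ t in Set.Ioi (0 : ℝ), greenIntegrand r a s t

lemma greenIntegrand_nonneg (r a s : ℝ) {t : ℝ} (ht : 0 < t) : 0 ≤ greenIntegrand r a s t := by
  unfold greenIntegrand; positivity

lemma continuousOn_greenIntegrand (r a s : ℝ) :
    ContinuousOn (greenIntegrand r a s) (Set.Ioi 0) := by
  intro t ht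
  have ht' : t ≠ 0 := ne_of_gt ht
  unfold greenIntegrand
  apply ContinuousAt.continuousWithinAt
  refine ContinuousAt.mul (ContinuousAt.mul (by fun_prop)
    (Real.continuousAt_rpow_const _ _ (Or.inl ht'))) ?_
  have : 2 * t ≠ 0 := by simpa using ht'
  fun_prop (disch := assumption)

lemma aestronglyMeasurable_greenIntegrand (r a s : ℝ) :
    AEStronglyMeasurable (greenIntegrand r a s) (volume.restrict (Set.Ioi 0)) :=
  (continuousOn_greenIntegrand r a s).aestronglyMeasurable measurableSet_Ioi

/-- The factor `e^{-s/(2t)}` compensates an arbitrarily negative power of `t` at the origin: by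
`e^y ≥ yⁿ/n!` it is at most `n! (2t/s)ⁿ`, which reduces integrability to that of a Gamma
integrand. -/
lemma integrableOn_greenIntegrand {r s : ℝ} (hr : 0 < r) (hs : 0 < s) (a : ℝ) :
    IntegrableOn (greenIntegrand r a s) (Set.Ioi 0) := by
  obtain ⟨n, hn⟩ := exists_nat_gt (-1 - a)
  have hint : IntegrableOn (fun t : ℝ => t ^ (a + n) * Real.exp (-r * t)) (Set.Ioi 0) := by
    have := integrableOn_rpow_mul_exp_neg_mul_rpow (p := 1) (s := a + n) (b := r)
      (by linarith) one_pos hr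
    simpa using this
  refine Integrable.mono' (hint.const_mul ((n.factorial : ℝ) * (2 / s) ^ n))
    (aestronglyMeasurable_greenIntegrand r a s) ?_
  refine (ae_restrict_iff' measurableSet_Ioi).2 (Eventually.of_forall fun t (ht : 0 < t) => ?_)
  rw [Real.norm_of_nonneg (greenIntegrand_nonneg r a s ht)]
  have key : Real.exp (-s / (2 * t)) ≤ n.factorial * (2 / s) ^ n * t ^ n := by
    have h := Real.pow_div_factorial_le_exp (s / (2 * t)) (by positivity) n
    rw [neg_div, Real.exp_neg]
    calc (Real.exp (s / (2 * t)))⁻¹ ≤ ((s / (2 * t)) ^ n / n.factorial)⁻¹ :=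
          inv_anti₀ (by positivity) h
      _ = n.factorial * (2 / s) ^ n * t ^ n := by
          rw [inv_div, div_eq_mul_inv, mul_assoc, ← mul_pow, ← inv_pow]
          congr 2
          field_simp
  unfold greenIntegrand
  calc _ ≤ Real.exp (-r * t) * t ^ a * (n.factorial * (2 / s) ^ n * t ^ n) := by gcongr
    _ = _ := by rw [Real.rpow_add ht, Real.rpow_natCast]; ring

lemma hasDerivAt_greenIntegrand_sq_dist (r a s : ℝ) {t : ℝ} (ht : 0 < t) :
    HasDerivAt (fun s => greenIntegrand r a s t) (-(1 / 2) * greenIntegrand r (a - 1) s t) s := by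
  have h : HasDerivAt (fun s : ℝ => -s / (2 * t)) (-1 / (2 * t)) s :=
    ((hasDerivAt_id s).neg).div_const (2 * t)
  have := h.exp.const_mul (Real.exp (-r * t) * t ^ a)
  refine this.congr_deriv ?_
  unfold greenIntegrand
  rw [Real.rpow_sub_one ht.ne']
  field_simp

lemma greenIntegrand_anti (r a : ℝ) {s s' t : ℝ} (ht : 0 < t) (h : s ≤ s') :
    greenIntegrand r a s' t ≤ greenIntegrand r a s t := by
  unfold greenIntegrand
  gcongr

lemma hasDerivAt_greenRadial {r s : ℝ} (hr : 0 < r) (hs : 0 < s) (a : ℝ) :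
    HasDerivAt (greenRadial r a) (-(1 / 2) * greenRadial r (a - 1) s) s := by
  have h := hasDerivAt_integral_of_dominated_loc_of_deriv_le
    (μ := volume.restrict (Set.Ioi (0 : ℝ))) (F := greenIntegrand r a)
    (F' := fun s t => -(1 / 2) * greenIntegrand r (a - 1) s t)
    (bound := fun t => greenIntegrand r (a - 1) (s / 2) t) (x₀ := s)
    (s := Set.Ioi (s / 2)) (Ioi_mem_nhds (by linarith))
    (Eventually.of_forall fun s => aestronglyMeasurable_greenIntegrand r a s)
    (integrableOn_greenIntegrand hr hs a)
    ((aestronglyMeasurable_greenIntegrand r (a - 1) s).const_mul _)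
    ((ae_restrict_iff' measurableSet_Ioi).2 (Eventually.of_forall fun t (ht : 0 < t) y hy => by
      have h1 := greenIntegrand_nonneg r (a - 1) y ht
      have h2 := greenIntegrand_anti r (a - 1) ht (le_of_lt (Set.mem_Ioi.1 hy))
      rw [Real.norm_eq_abs, abs_le]
      constructor <;> linarith))
    (integrableOn_greenIntegrand hr (by linarith) _)
    ((ae_restrict_iff' measurableSet_Ioi).2 (Eventually.of_forall fun t (ht : 0 < t) y _ =>
      hasDerivAt_greenIntegrand_sq_dist r a y ht))
  have h2 := h.2
  rw [integral_const_mul] at h2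
  exact h2

lemma contDiffOn_greenRadial {r : ℝ} (hr : 0 < r) (n : ℕ) (a : ℝ) :
    ContDiffOn ℝ n (greenRadial r a) (Set.Ioi 0) := by
  induction n generalizing a with
  | zero =>
    exact contDiffOn_zero.2 fun s hs =>
      (hasDerivAt_greenRadial hr hs a).continuousAt.continuousWithinAt
  | succ n ih =>
    push_cast
    rw [contDiffOn_succ_iff_deriv_of_isOpen isOpen_Ioi]
    refine ⟨fun s hs =>
      (hasDerivAt_greenRadial hr hs a).differentiableAt.differentiableWithinAt, by simp, ?_⟩
    exact (contDiffOn_const.mul (ih (a - 1))).congr fun s hs =>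
      (hasDerivAt_greenRadial hr hs a).deriv

lemma hasDerivAt_greenIntegrand_time (r a s : ℝ) {t : ℝ} (ht : 0 < t) :
    HasDerivAt (greenIntegrand r a s)
      (-r * greenIntegrand r a s t + a * greenIntegrand r (a - 1) s t
        + s / 2 * greenIntegrand r (a - 2) s t) t := by
  have h1 : HasDerivAt (fun t => Real.exp (-r * t)) (Real.exp (-r * t) * (-r * 1)) t :=
    ((hasDerivAt_id t).const_mul (-r)).exp
  have h2 := Real.hasDerivAt_rpow_const (x := t) (p := a) (Or.inl ht.ne')
  have h3 : HasDerivAt (fun t => -s / (2 * t)) (s / (2 * t ^ 2)) t := by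
    have := (hasDerivAt_inv ht.ne').const_mul (-s / 2)
    have e : (fun t => -s / (2 * t)) = fun t => -s / 2 * t⁻¹ := by ext x; ring
    rw [e]
    refine this.congr_deriv ?_
    field_simp
  have := (h1.mul h2).mul h3.exp
  refine this.congr_deriv ?_
  unfold greenIntegrand
  have e : t ^ (a - 2) = t ^ a / t ^ 2 := by
    rw [Real.rpow_sub ht]; norm_num
  simp only [Pi.mul_apply]
  rw [e, Real.rpow_sub_one ht.ne']
  field_simp

lemma tendsto_greenIntegrand_zero {r s : ℝ} (hr : 0 < r) (hs : 0 < s) (a : ℝ) :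
    Tendsto (greenIntegrand r a s) (𝓝[>] 0) (𝓝 0) := by
  -- Substituting `u = 1/t` turns the limit into that of `u^{-a} e^{-(s/2)u}` at infinity.
  have h := (tendsto_rpow_mul_exp_neg_mul_atTop_nhds_zero (-a) (s / 2) (by linarith)).comp
    tendsto_inv_nhdsGT_zero
  refine squeeze_zero' ?_ ?_ h
  · filter_upwards [self_mem_nhdsWithin] with t ht using greenIntegrand_nonneg r a s ht
  · filter_upwards [self_mem_nhdsWithin] with t ht
    have ht : 0 < t := ht
    have e1 : Real.exp (-r * t) ≤ 1 := Real.exp_le_one_iff.2 (by nlinarith)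
    have e2 : t⁻¹ ^ (-a) = t ^ a := by
      rw [Real.inv_rpow ht.le, Real.rpow_neg ht.le, inv_inv]
    have e3 : -(s / 2) * t⁻¹ = -s / (2 * t) := by field_simp
    simp only [Function.comp, e2, e3]
    unfold greenIntegrand
    calc _ ≤ 1 * t ^ a * Real.exp (-s / (2 * t)) := by gcongr
      _ = _ := by rw [one_mul]

lemma tendsto_greenIntegrand_atTop {r s : ℝ} (hr : 0 < r) (hs : 0 < s) (a : ℝ) :
    Tendsto (greenIntegrand r a s) atTop (𝓝 0) := by
  have h := tendsto_rpow_mul_exp_neg_mul_atTop_nhds_zero a r hr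
  refine squeeze_zero' ?_ ?_ h
  · filter_upwards [eventually_gt_atTop 0] with t ht using greenIntegrand_nonneg r a s ht
  · filter_upwards [eventually_gt_atTop 0] with t ht
    have e1 : Real.exp (-s / (2 * t)) ≤ 1 := by
      rw [Real.exp_le_one_iff, neg_div, neg_nonpos]; positivity
    unfold greenIntegrand
    calc _ ≤ Real.exp (-r * t) * t ^ a * 1 := by gcongr
      _ = _ := by ring

/-- The recurrence between the radial profiles expresses `∫_0^∞ ∂_t k_a(s, t) dt = 0`. -/
lemma greenRadial_recurrence {r s a : ℝ} (hr : 0 < r) (hs : 0 < s) (ha : a ≠ 0) :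
    s / 2 * greenRadial r (a - 2) s + a * greenRadial r (a - 1) s = r * greenRadial r a s := by
  have i0 := (integrableOn_greenIntegrand hr hs a).const_mul (-r)
  have i1 := (integrableOn_greenIntegrand hr hs (a - 1)).const_mul a
  have i2 := (integrableOn_greenIntegrand hr hs (a - 2)).const_mul (s / 2)
  -- Since `a ≠ 0`, the junk value of the integrand at `t = 0` is `0 ^ a = 0`, its right limit.
  have hz : greenIntegrand r a s 0 = 0 := by simp [greenIntegrand, Real.zero_rpow ha]
  have hcont : ContinuousWithinAt (greenIntegrand r a s) (Set.Ici 0) 0 := by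
    rw [← continuousWithinAt_Ioi_iff_Ici, ContinuousWithinAt, hz]
    exact tendsto_greenIntegrand_zero hr hs a
  have h := integral_Ioi_of_hasDerivAt_of_tendsto hcont
    (fun t ht => hasDerivAt_greenIntegrand_time r a s ht) ((i0.add i1).add i2)
    (tendsto_greenIntegrand_atTop hr hs a)
  rw [integral_add (by exact i0.add i1) i2, integral_add i0 i1, integral_const_mul,
    integral_const_mul, integral_const_mul, hz] at h
  unfold greenRadial
  linarith

/-- The Laplacian of `x ↦ h(‖x - x₁‖²)` is `4 ‖x - x₁‖² h'' + 2 d h'`. -/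
lemma laplacian_radial {d : ℕ} {h h' h'' : ℝ → ℝ}
    (H : ∀ s, 0 < s → HasDerivAt h (h' s) s) (H' : ∀ s, 0 < s → HasDerivAt h' (h'' s) s)
    {x x₁ : EuclideanSpace ℝ (Fin d)} (hx : x ≠ x₁) :
    laplacian (fun z => h (‖z - x₁‖ ^ 2)) x =
      4 * ‖x - x₁‖ ^ 2 * h'' (‖x - x₁‖ ^ 2) + 2 * d * h' (‖x - x₁‖ ^ 2) := by
  have hpos : ∀ y, y ≠ x₁ → 0 < ‖y - x₁‖ ^ 2 := fun y hy => by
    have := norm_pos_iff.2 (sub_ne_zero.2 hy)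
    positivity
  have hN : ∀ y, HasFDerivAt (fun z : EuclideanSpace ℝ (Fin d) => ‖z - x₁‖ ^ 2)
      (2 • innerSL ℝ (y - x₁)) y := fun y => by
    simpa using ((hasFDerivAt_id y).sub_const x₁).norm_sq
  have hterm : ∀ i : Fin d,
      fderiv ℝ (fun y => fderiv ℝ (fun z => h (‖z - x₁‖ ^ 2)) y
        (EuclideanSpace.single i (1 : ℝ))) x (EuclideanSpace.single i (1 : ℝ)) =
      4 * h'' (‖x - x₁‖ ^ 2) * ((x - x₁) i) ^ 2 + 2 * h' (‖x - x₁‖ ^ 2) := fun i => by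
    have heq : (fun y => fderiv ℝ (fun z => h (‖z - x₁‖ ^ 2)) y
        (EuclideanSpace.single i (1 : ℝ))) =ᶠ[𝓝 x]
        fun y => h' (‖y - x₁‖ ^ 2) *
          (2 * innerSL ℝ (EuclideanSpace.single i (1 : ℝ)) (y - x₁)) := by
      filter_upwards [isOpen_ne.mem_nhds hx] with y hy
      have := (H _ (hpos y hy)).comp_hasFDerivAt y (hN y)
      rw [HasFDerivAt.fderiv (f := fun z => h (‖z - x₁‖ ^ 2)) this]
      simp only [_root_.smul_apply, innerSL_apply_apply, smul_eq_mul, nsmul_eq_mul,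
        real_inner_comm]
      simp
    rw [heq.fderiv_eq]
    have d1 := (H' _ (hpos x hx)).comp_hasFDerivAt x (hN x)
    have d2 : HasFDerivAt (fun y => 2 * innerSL ℝ (EuclideanSpace.single i (1 : ℝ)) (y - x₁))
        ((2 : ℝ) • innerSL ℝ (EuclideanSpace.single i (1 : ℝ))) x := by
      have := ((innerSL ℝ (EuclideanSpace.single i (1 : ℝ))).hasFDerivAt.comp x
        ((hasFDerivAt_id x).sub_const x₁)).const_mul (2 : ℝ)
      simpa using this
    have d3 := d1.mul d2
    rw [HasFDerivAt.fderiv (f := fun y => h' (‖y - x₁‖ ^ 2) *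
          (2 * innerSL ℝ (EuclideanSpace.single i (1 : ℝ)) (y - x₁))) d3]
    simp [EuclideanSpace.inner_single_left, EuclideanSpace.inner_single_right]
    ring
  unfold laplacian
  rw [Finset.sum_congr rfl fun i _ => hterm i, Finset.sum_add_distrib, ← Finset.mul_sum,
    ← EuclideanSpace.real_norm_sq_eq]
  simp
  ring

lemma greenKernelReal_eq (r : ℝ) (d : ℕ) (x y : EuclideanSpace ℝ (Fin d)) :
    greenKernelReal r d x y =
      (2 * Real.pi) ^ (-(d : ℝ) / 2) * greenRadial r (-(d : ℝ) / 2) (‖x - y‖ ^ 2) := by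
  unfold greenKernelReal greenRadial greenIntegrand
  rw [← integral_const_mul]
  refine setIntegral_congr_fun measurableSet_Ioi fun t (ht : 0 < t) => ?_
  rw [Real.mul_rpow (by positivity) ht.le]
  ring

/-- For every `r > 0`, `d ≥ 1` and `x₁ ∈ ℝ^d`, the function `u(x) = G_r(x,x₁)` is
infinitely differentiable on `ℝ^d ∖ {x₁}` and is `r`-harmonic for the Brownian generator
there: `(1/2)·Δu(x) = r·u(x)` for all `x ≠ x₁`. -/
theorem greenKernelReal_smooth_and_rHarmonic (r : ℝ) (hr : 0 < r) (d : ℕ) (hd : 1 ≤ d)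
    (x₁ : EuclideanSpace ℝ (Fin d)) :
    ContDiffOn ℝ (⊤ : ℕ∞) (fun x => greenKernelReal r d x x₁) {x₁}ᶜ ∧
      ∀ x : EuclideanSpace ℝ (Fin d), x ≠ x₁ →
        (1 / 2) * laplacian (fun z => greenKernelReal r d z x₁) x =
          r * greenKernelReal r d x x₁ := by
  have hpos : ∀ y, y ≠ x₁ → 0 < ‖y - x₁‖ ^ 2 := fun y hy => by
    have := norm_pos_iff.2 (sub_ne_zero.2 hy)
    positivity
  simp only [greenKernelReal_eq]
  constructor
  · refine contDiffOn_const.mul ?_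
    refine ContDiffOn.comp (g := greenRadial r (-(d : ℝ) / 2)) (t := Set.Ioi 0)
      (contDiffOn_infty.2 fun n => contDiffOn_greenRadial hr n _) ?_ fun y hy => hpos y hy
    exact ((contDiff_id.sub contDiff_const).norm_sq ℝ).contDiffOn
  · intro x hx
    set c : ℝ := (2 * Real.pi) ^ (-(d : ℝ) / 2)
    set a : ℝ := -(d : ℝ) / 2 with ha
    have hlap := laplacian_radial
      (h := fun s => c * greenRadial r a s)
      (h' := fun s => c * (-(1 / 2) * greenRadial r (a - 1) s))
      (h'' := fun s => c * (-(1 / 2) * (-(1 / 2) * greenRadial r (a - 1 - 1) s)))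
      (fun s hs => (hasDerivAt_greenRadial hr hs a).const_mul c)
      (fun s hs => ((hasDerivAt_greenRadial hr hs (a - 1)).const_mul _).const_mul c) hx
    rw [hlap]
    have ha0 : a ≠ 0 := by
      have : (1 : ℝ) ≤ d := by exact_mod_cast hd
      intro h
      linarith
    have hrec := greenRadial_recurrence hr (hpos x hx) ha0
    have ea : a - 1 - 1 = a - 2 := by ring
    have ed : (d : ℝ) = -2 * a := by rw [ha]; ring
    rw [ea, ed]
    linear_combination c * hrec
end

section
/- Let U ⊆ ℝ^d be open, let h : U → ℝ be twice continuously differentiable with h > 0 on U, let b : ℝ^d → ℝ^d, σ : ℝ^d → ℝ^{d×m}, r ∈ ℝ, and let x ∈ U satisfy 𝔸h(x) = r·h(x). Then g = −log h solves the Hamilton–Jacobi–Bellman equation at x: the infimum over u ∈ ℝ^m of ⟨b(x) + σ(x)u, ∇g(x)⟩ + (1/2)·Tr(Σ(x)∇²g(x)) + r + (1/2)·‖u‖² equals 0, and it is attained at u* = σ(x)ᵀ∇log h(x) = −σ(x)ᵀ∇g(x). -/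
/-!
Write `g = -log h`. On `U` one has `∇g = -h⁻¹ ∇h`, and differentiating once more
`∇²g = -h⁻¹ ∇²h + ∇g ∇gᵀ` (`grad_neg_log`, `hess_neg_log`). With `v = σᵀ∇g` this gives
`Tr(Σ ∇²g) = -h⁻¹ Tr(Σ ∇²h) + |v|²`, so `𝔸h = r h` is equivalent to
`⟨b, ∇g⟩ + ½ Tr(Σ ∇²g) + r = ½ |v|²`. The expression to be minimised is therefore
`½ |v|² + ⟨u, v⟩ + ½ |u|² = ½ |u + v|²`: it is nonnegative and vanishes exactly at `u = -v`.
-/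

open Matrix

/-- The gradient (vector of partial derivatives) of `f : ℝ^d → ℝ` at `x`. -/
noncomputable def grad {d : ℕ} (f : (Fin d → ℝ) → ℝ) (x : Fin d → ℝ) : Fin d → ℝ :=
  fun i => fderiv ℝ f x (Pi.single i 1)

/-- The Hessian matrix of `f : ℝ^d → ℝ` at `x`. -/
noncomputable def hess {d : ℕ} (f : (Fin d → ℝ) → ℝ) (x : Fin d → ℝ) :
    Matrix (Fin d) (Fin d) ℝ :=
  Matrix.of fun i j => fderiv ℝ (fun y => fderiv ℝ f y (Pi.single j 1)) x (Pi.single i 1)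

lemma grad_neg_log {d : ℕ} {h : (Fin d → ℝ) → ℝ} {x : Fin d → ℝ}
    (hd : DifferentiableAt ℝ h x) (hx : h x ≠ 0) :
    grad (fun y => -Real.log (h y)) x = -((h x)⁻¹ • grad h x) := by
  ext i
  simp [grad, fderiv.log hd hx]

lemma hess_neg_log {d : ℕ} {h : (Fin d → ℝ) → ℝ} {x : Fin d → ℝ}
    (hd : ContDiffAt ℝ 2 h x) (hx : h x ≠ 0) :
    hess (fun y => -Real.log (h y)) x =
      -((h x)⁻¹ • hess h x) +
        vecMulVec (grad (fun y => -Real.log (h y)) x) (grad (fun y => -Real.log (h y)) x) := by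
  have hd1 : DifferentiableAt ℝ h x := hd.differentiableAt (by norm_num)
  rw [grad_neg_log hd1 hx]
  ext i j
  -- The first-order formula holds in a neighbourhood of `x`, so it may be differentiated.
  have hev : (fun y => fderiv ℝ (fun y => -Real.log (h y)) y (Pi.single j 1)) =ᶠ[nhds x]
      fun y => -((h y)⁻¹ * fderiv ℝ h y (Pi.single j 1)) := by
    filter_upwards [hd.eventually (by simp), hd.continuousAt.eventually_ne hx] with y hy hy0
    exact congrFun (grad_neg_log (hy.differentiableAt (by norm_num)) hy0) j
  have hd2 : DifferentiableAt ℝ (fun y => fderiv ℝ h y (Pi.single j 1)) x :=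
    ((hd.fderiv_right (m := 1) (by norm_num)).differentiableAt (by norm_num)).clm_apply
      (differentiableAt_const _)
  have hinv : HasFDerivAt (fun y => (h y)⁻¹) (-(h x ^ 2)⁻¹ • fderiv ℝ h x) x :=
    (hasDerivAt_inv hx).comp_hasFDerivAt x hd1.hasFDerivAt
  have hder := (hinv.mul hd2.hasFDerivAt).neg
  have e := hev.fderiv_eq.trans hder.fderiv
  simp only [hess, Matrix.of_apply, Matrix.add_apply, Matrix.neg_apply, Matrix.smul_apply,
    vecMulVec_apply, Pi.neg_apply, Pi.smul_apply, grad, smul_eq_mul]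
  rw [e]
  simp
  ring

lemma trace_vecMulVec_self {d m : ℕ} (s : Matrix (Fin d) (Fin m) ℝ) (v : Fin d → ℝ) :
    (s * sᵀ * vecMulVec v v).trace = (sᵀ *ᵥ v) ⬝ᵥ (sᵀ *ᵥ v) := by
  rw [mul_vecMulVec, trace_vecMulVec, ← mulVec_mulVec, dotProduct_comm, dotProduct_mulVec,
    ← mulVec_transpose]

/-- Let `U ⊆ ℝ^d` be open, `h` twice continuously differentiable and positive on `U`, and
`x ∈ U` with `𝔸h(x) = r·h(x)`.  Then `g = -log h` solves the HJB equation at `x`: the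
infimum over `u ∈ ℝ^m` of
`⟨b(x) + σ(x)u, ∇g(x)⟩ + (1/2)·Tr(Σ(x)∇²g(x)) + r + (1/2)·‖u‖²` equals `0`, attained at
`u* = σ(x)ᵀ∇log h(x) = -σ(x)ᵀ∇g(x)`. -/
theorem neg_log_h_solves_HJB {d m : ℕ} (U : Set (Fin d → ℝ)) (hU : IsOpen U)
    (h : (Fin d → ℝ) → ℝ) (hC2 : ContDiffOn ℝ 2 h U) (hpos : ∀ y ∈ U, 0 < h y)
    (b : (Fin d → ℝ) → Fin d → ℝ) (σ : (Fin d → ℝ) → Matrix (Fin d) (Fin m) ℝ)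
    (r : ℝ) (x : Fin d → ℝ) (hx : x ∈ U)
    (g : (Fin d → ℝ) → ℝ) (hg : g = fun y => -Real.log (h y))
    (hharm : b x ⬝ᵥ grad h x + (1 / 2) * (σ x * (σ x)ᵀ * hess h x).trace = r * h x)
    (ustar : Fin m → ℝ) (hustar : ustar = (σ x)ᵀ *ᵥ grad (fun y => Real.log (h y)) x) :
    (∀ u : Fin m → ℝ,
        0 ≤ (b x + (σ x) *ᵥ u) ⬝ᵥ grad g x + (1 / 2) * (σ x * (σ x)ᵀ * hess g x).trace + r +
            (1 / 2) * ∑ i, u i ^ 2) ∧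
      (b x + (σ x) *ᵥ ustar) ⬝ᵥ grad g x + (1 / 2) * (σ x * (σ x)ᵀ * hess g x).trace + r +
          (1 / 2) * ∑ i, ustar i ^ 2 = 0 ∧
      ustar = -((σ x)ᵀ *ᵥ grad g x) := by
  have hxp : h x ≠ 0 := (hpos x hx).ne'
  have hd : ContDiffAt ℝ 2 h x := hC2.contDiffAt (hU.mem_nhds hx)
  have hgrad : grad g x = -((h x)⁻¹ • grad h x) := by
    rw [hg]; exact grad_neg_log (hd.differentiableAt (by norm_num)) hxp
  have hhess : hess g x = -((h x)⁻¹ • hess h x) + vecMulVec (grad g x) (grad g x) := by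
    rw [hg]; exact hess_neg_log hd hxp
  have hu : ustar = -((σ x)ᵀ *ᵥ grad g x) := by
    have hlog : grad (fun y => Real.log (h y)) x = -grad g x := by
      ext i
      simp [grad, hg]
    rw [hustar, hlog, mulVec_neg]
  have hzero : b x ⬝ᵥ grad g x + (1 / 2) * (σ x * (σ x)ᵀ * hess g x).trace + r =
      (1 / 2) * (((σ x)ᵀ *ᵥ grad g x) ⬝ᵥ ((σ x)ᵀ *ᵥ grad g x)) := by
    rw [hhess, Matrix.mul_add, trace_add, trace_vecMulVec_self, Matrix.mul_neg, trace_neg,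
      Matrix.mul_smul, trace_smul]
    have hb : b x ⬝ᵥ grad g x = -((h x)⁻¹ * (b x ⬝ᵥ grad h x)) := by
      rw [hgrad, dotProduct_neg, dotProduct_smul, smul_eq_mul]
    rw [hb, eq_sub_of_add_eq hharm, smul_eq_mul]
    field_simp
    ring
  have key : ∀ u : Fin m → ℝ,
      (b x + (σ x) *ᵥ u) ⬝ᵥ grad g x + (1 / 2) * (σ x * (σ x)ᵀ * hess g x).trace + r +
        (1 / 2) * ∑ i, u i ^ 2 = (1 / 2) * ∑ i, (u i + ((σ x)ᵀ *ᵥ grad g x) i) ^ 2 := by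
    intro u
    have hcross : (σ x *ᵥ u) ⬝ᵥ grad g x = u ⬝ᵥ ((σ x)ᵀ *ᵥ grad g x) := by
      rw [dotProduct_comm, dotProduct_mulVec, ← mulVec_transpose, dotProduct_comm]
    have hsq : ∑ i, (u i + ((σ x)ᵀ *ᵥ grad g x) i) ^ 2 = ∑ i, u i ^ 2 +
        2 * (u ⬝ᵥ ((σ x)ᵀ *ᵥ grad g x)) +
        ((σ x)ᵀ *ᵥ grad g x) ⬝ᵥ ((σ x)ᵀ *ᵥ grad g x) := by
      simp only [dotProduct, Finset.mul_sum, ← Finset.sum_add_distrib]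
      exact Finset.sum_congr rfl fun i _ => by ring
    rw [add_dotProduct, hcross, hsq]
    linarith
  refine ⟨fun u => ?_, ?_, hu⟩
  · rw [key u]
    positivity
  · rw [key ustar, hu]
    simp
end

section
/- Let Ω ⊆ ℝ^d be closed and nonempty, let ζ > 0, and let f : [0,ζ] → ℝ^d be continuous with f(t) ∉ Ω for all t ∈ [0,ζ) and f(ζ) ∈ Ω. For ε > 0 define the first entrance time τ_ε = inf{ t ∈ [0,ζ] : dist(f(t), Ω) ≤ ε } (which is well defined since dist(f(ζ),Ω) = 0). Then: (i) ε ↦ τ_ε is antitone (τ_ε increases as ε decreases); (ii) τ_ε → ζ as ε → 0⁺; and (iii) f(τ_ε) → f(ζ) as ε → 0⁺. (This justifies early stopping of the generative backward process: the first entrance point into the ε-environment Ω_ε converges to the terminal point in the data support.) -/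
open MeasureTheory Filter

/-!
On each interval `[0, s]` with `s < ζ`, the continuous function `t ↦ dist(f t, Ω)` attains a
minimum `m`, and `m > 0` because `Ω` is closed and `f` avoids it there. For `ε < m` no time
up to `s` lies in the entrance set, so `s ≤ τ ε ≤ ζ`; letting `s` tend to `ζ` gives `τ ε → ζ`.
Monotonicity is inclusion of the entrance sets, all of which contain `ζ`, and
`f (τ ε) → f ζ` is continuity of `f` within `[0, ζ]`.
-/

/-- Early stopping of the generative backward process: let `Ω ⊆ ℝ^d` be closed and
nonempty, `ζ > 0`, and `f : [0,ζ] → ℝ^d` continuous with `f(t) ∉ Ω` for `t ∈ [0,ζ)` and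
`f(ζ) ∈ Ω`. For `ε > 0` let `τ_ε = inf {t ∈ [0,ζ] : dist(f(t),Ω) ≤ ε}`. Then (i) `ε ↦ τ_ε`
is antitone, (ii) `τ_ε → ζ` as `ε → 0⁺`, and (iii) `f(τ_ε) → f(ζ)` as `ε → 0⁺`. -/
theorem first_entrance_time_convergence {d : ℕ}
    (Ω : Set (EuclideanSpace ℝ (Fin d))) (hΩclosed : IsClosed Ω) (hΩne : Ω.Nonempty)
    (ζ : ℝ) (hζ : 0 < ζ) (f : ℝ → EuclideanSpace ℝ (Fin d))
    (hf : ContinuousOn f (Set.Icc 0 ζ))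
    (hout : ∀ t ∈ Set.Ico 0 ζ, f t ∉ Ω) (hin : f ζ ∈ Ω)
    (τ : ℝ → ℝ)
    (hτ : τ = fun ε => sInf {t | t ∈ Set.Icc 0 ζ ∧ Metric.infDist (f t) Ω ≤ ε}) :
    AntitoneOn τ (Set.Ioi 0) ∧
      Tendsto τ (nhdsWithin 0 (Set.Ioi 0)) (nhds ζ) ∧
      Tendsto (fun ε => f (τ ε)) (nhdsWithin 0 (Set.Ioi 0)) (nhds (f ζ)) := by
  have hmem : ∀ ε, 0 < ε → ζ ∈ {t | t ∈ Set.Icc 0 ζ ∧ Metric.infDist (f t) Ω ≤ ε} :=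
    fun ε hε => ⟨⟨hζ.le, le_rfl⟩, by rw [Metric.infDist_zero_of_mem hin]; exact hε.le⟩
  have hbdd : ∀ ε, BddBelow {t | t ∈ Set.Icc 0 ζ ∧ Metric.infDist (f t) Ω ≤ ε} :=
    fun ε => ⟨0, fun t ht => ht.1.1⟩
  have hτIcc : ∀ ε, 0 < ε → τ ε ∈ Set.Icc 0 ζ := by
    intro ε hε
    rw [hτ]
    exact ⟨le_csInf ⟨ζ, hmem ε hε⟩ fun t ht => ht.1.1, csInf_le (hbdd ε) (hmem ε hε)⟩
  have hlim : Tendsto τ (nhdsWithin 0 (Set.Ioi 0)) (nhds ζ) := by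
    refine tendsto_order.2 ⟨fun a ha => ?_, fun b hb => ?_⟩
    · obtain ⟨s, has, hsζ⟩ := exists_between (max_lt ha hζ)
      have hs0 : 0 < s := (le_max_right a 0).trans_lt has
      have hcont : ContinuousOn (fun t => Metric.infDist (f t) Ω) (Set.Icc 0 s) :=
        (Metric.continuous_infDist_pt Ω).comp_continuousOn
          (hf.mono (Set.Icc_subset_Icc_right hsζ.le))
      obtain ⟨t₀, ht₀, hmin⟩ := isCompact_Icc.exists_isMinOn ⟨0, le_rfl, hs0.le⟩ hcont
      have hpos : 0 < Metric.infDist (f t₀) Ω :=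
        (hΩclosed.notMem_iff_infDist_pos hΩne).1 (hout t₀ ⟨ht₀.1, ht₀.2.trans_lt hsζ⟩)
      filter_upwards [Ioo_mem_nhdsGT hpos] with ε hε
      refine ((le_max_left a 0).trans_lt has).trans_le ?_
      rw [hτ]
      refine le_csInf ⟨ζ, hmem ε hε.1⟩ fun t ht => ?_
      by_contra! hts
      exact absurd (hmin ⟨ht.1.1, hts.le⟩) (not_le.2 (ht.2.trans_lt hε.2))
    · filter_upwards [self_mem_nhdsWithin] with ε hε
      exact (hτIcc ε hε).2.trans_lt hb
  refine ⟨fun ε hε δ _ hεδ => ?_, hlim, ?_⟩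
  · rw [hτ]
    exact csInf_le_csInf (hbdd δ) ⟨ζ, hmem ε hε⟩ fun t ht => ⟨ht.1, ht.2.trans hεδ⟩
  · refine (hf ζ ⟨hζ.le, le_rfl⟩).tendsto.comp (tendsto_nhdsWithin_iff.2 ⟨hlim, ?_⟩)
    filter_upwards [self_mem_nhdsWithin] with ε hε using hτIcc ε hε
end
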